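/- Let γ¹, ..., γⁿ be odd elements of the Clifford algebra Cl(p,q) of even dimension n satisfying γᵃγᵇ + γᵇγᵃ = 2ηᵃᵇ. Then γ¹γ²⋯γⁿ = ± e¹e²⋯eⁿ. -/

import Mathlib

open CliffordAlgebra

/-- The quadratic form of signature (p,q) on ℝⁿ, n = p + q. -/
noncomputable def Qpq (p q : ℕ) : QuadraticForm ℝ (Fin (p + q) → ℝ) :=
  QuadraticMap.weightedSumSquares ℝ (fun i => if (i : ℕ) < p then (1 : ℝ) else -1)

/-- The generators e¹, ..., eⁿ of the Clifford algebra Cl(p,q). -/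
noncomputable def gen (p q : ℕ) (a : Fin (p + q)) : CliffordAlgebra (Qpq p q) :=
  ι (Qpq p q) (Pi.single a 1)

/-- The volume element e¹e²⋯eⁿ of Cl(p,q). -/
noncomputable def vol (p q : ℕ) : CliffordAlgebra (Qpq p q) :=
  ((List.finRange (p + q)).map (gen p q)).prod

/-- The diagonal matrix η = diag(1,...,1,−1,...,−1) with p pluses and q minuses. -/
def eta (p q : ℕ) (a b : Fin (p + q)) : ℝ :=
  if a = b then (if (a : ℕ) < p then 1 else -1) else 0

/-!
In even dimension the volume element `ω = e¹⋯eⁿ` satisfies `ω x = α(x) ω`, where `α` is the grade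
involution. The `γⁱ` define an endomorphism `φ` of the Clifford algebra that commutes with `α`, so
once `φ` is onto, `φ(ω) = γ¹⋯γⁿ` satisfies the same relation. Hence `ω²` and `ω φ(ω)` are even and
central, that is, scalars `s` and `r`. As `ω` and `φ(ω)` commute, `r² = ω² φ(ω)² = s²`, so
`ω φ(ω) = ± ω²`, and `ω` is invertible.

Both "even and central implies scalar" and the bijectivity of `φ` come from the identity
`v x - α(x) v = B(v, ·)⌋x`, with `B` the polar form: when `B` is nondegenerate, an even central
element is killed by every contraction, and an `α`-stable ideal is stable under every contraction.
Only scalars are killed by all contractions: after transport to the exterior algebra,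
`x - v ∧ (d⌋x) = Λ(1 - d ⊗ v) x`, and composing the maps `1 - bⁱ ⊗ bᵢ` over a basis gives
`x = Λ(0) x`.
-/

section Exterior

variable {R M : Type*} [CommRing R] [AddCommGroup M] [Module R M]

theorem exteriorAlgebra_map_id_sub_smulRight (d : Module.Dual R M) (v : M)
    (x : ExteriorAlgebra R M) :
    ExteriorAlgebra.map (LinearMap.id - d.smulRight v) x =
      x - ExteriorAlgebra.ι R v * contractLeft d x := by
  induction x using CliffordAlgebra.left_induction with
  | algebraMap r =>
    rw [AlgHom.commutes, contractLeft_algebraMap, mul_zero, sub_zero]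
  | add x y hx hy => rw [map_add, map_add, hx, hy, mul_add]; abel
  | ι_mul x m hx =>
    have hvv : ExteriorAlgebra.ι R v * ExteriorAlgebra.ι R v = 0 := ExteriorAlgebra.ι_sq_zero v
    have hvm : ExteriorAlgebra.ι R v * ExteriorAlgebra.ι R m =
        -(ExteriorAlgebra.ι R m * ExteriorAlgebra.ι R v) :=
      eq_neg_of_add_eq_zero_left (ExteriorAlgebra.ι_add_mul_swap v m)
    rw [map_mul, ExteriorAlgebra.map_apply_ι, hx, contractLeft_ι_mul]
    simp only [LinearMap.sub_apply, LinearMap.id_apply, LinearMap.smulRight_apply, map_sub,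
      map_smul, mul_sub, sub_mul, smul_mul_assoc, mul_smul_comm, ← mul_assoc, hvv, hvm,
      zero_mul, smul_zero]
    noncomm_ring

theorem exteriorAlgebra_map_zero_apply (x : ExteriorAlgebra R M) :
    ExteriorAlgebra.map (0 : M →ₗ[R] M) x =
      algebraMap R (ExteriorAlgebra R M) (ExteriorAlgebra.algebraMapInv x) := by
  have h : ExteriorAlgebra.map (0 : M →ₗ[R] M) =
      (Algebra.ofId R (ExteriorAlgebra R M)).comp ExteriorAlgebra.algebraMapInv := by
    ext m
    simp [ExteriorAlgebra.algebraMapInv]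
  exact DFunLike.congr_fun h x

variable {I : Type*}

theorem smulRight_coord_comp_sum_eq_zero (b : Module.Basis I R M) {s : Finset I} {i : I}
    (hi : i ∉ s) :
    (b.coord i).smulRight (b i) ∘ₗ ∑ j ∈ s, (b.coord j).smulRight (b j) = 0 := by
  ext v
  have hji : ∀ j ∈ s, b.coord i (b j) = 0 := fun j hj => by
    rw [b.coord_apply, b.repr_self, Finsupp.single_eq_of_ne (by rintro rfl; exact hi hj)]
  simp only [LinearMap.comp_apply, LinearMap.sum_apply, LinearMap.smulRight_apply,
    LinearMap.zero_apply, map_sum, map_smul]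
  exact Finset.sum_eq_zero fun j hj => by rw [hji j hj, zero_smul, smul_zero]

theorem exteriorAlgebra_map_id_sub_sum_of_contractLeft_coord_eq_zero (b : Module.Basis I R M)
    {x : ExteriorAlgebra R M} (hx : ∀ i, contractLeft (b.coord i) x = 0) (s : Finset I) :
    ExteriorAlgebra.map (LinearMap.id - ∑ i ∈ s, (b.coord i).smulRight (b i)) x = x := by
  classical
  induction s using Finset.induction_on with
  | empty => rw [Finset.sum_empty, sub_zero, ExteriorAlgebra.map_id, AlgHom.id_apply]
  | insert i s hi ih =>
    have hcomp : LinearMap.id - ∑ j ∈ insert i s, (b.coord j).smulRight (b j) =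
        (LinearMap.id - (b.coord i).smulRight (b i)) ∘ₗ
          (LinearMap.id - ∑ j ∈ s, (b.coord j).smulRight (b j)) := by
      rw [LinearMap.sub_comp, LinearMap.comp_sub, LinearMap.comp_sub,
        smulRight_coord_comp_sum_eq_zero b hi, Finset.sum_insert hi, LinearMap.id_comp,
        LinearMap.id_comp, LinearMap.comp_id]
      abel
    rw [hcomp, ← ExteriorAlgebra.map_comp_map, AlgHom.comp_apply, ih,
      exteriorAlgebra_map_id_sub_smulRight, hx, mul_zero, sub_zero]

theorem exteriorAlgebra_mem_range_algebraMap_of_contractLeft_coord_eq_zero [Finite I]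
    (b : Module.Basis I R M) {x : ExteriorAlgebra R M} (hx : ∀ i, contractLeft (b.coord i) x = 0) :
    x ∈ Set.range (algebraMap R (ExteriorAlgebra R M)) := by
  have := Fintype.ofFinite I
  have hid : ∑ i, (b.coord i).smulRight (b i) = LinearMap.id :=
    LinearMap.ext fun v => by simp [b.sum_repr]
  have hfix := exteriorAlgebra_map_id_sub_sum_of_contractLeft_coord_eq_zero b hx Finset.univ
  rw [hid, sub_self, exteriorAlgebra_map_zero_apply] at hfix
  exact ⟨_, hfix⟩

end Exterior

section Contraction

variable {R M : Type*} [CommRing R] [AddCommGroup M] [Module R M] {Q : QuadraticForm R M}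

theorem ι_mul_sub_involute_mul_ι (v : M) (x : CliffordAlgebra Q) :
    ι Q v * x - involute x * ι Q v = contractLeft (Q.polarBilin v) x := by
  induction x using CliffordAlgebra.left_induction with
  | algebraMap r => rw [AlgHom.commutes, Algebra.commutes, sub_self, contractLeft_algebraMap]
  | add x y hx hy => rw [map_add, map_add, ← hx, ← hy]; noncomm_ring
  | ι_mul x m hx =>
    have hswap : ι Q v * ι Q m = algebraMap R _ (Q.polarBilin v m) - ι Q m * ι Q v :=
      eq_sub_of_add_eq (ι_mul_ι_add_swap v m)
    rw [map_mul, involute_ι, contractLeft_ι_mul, ← hx, ← mul_assoc, hswap, sub_mul,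
      ← Algebra.smul_def]
    noncomm_ring

theorem mul_eq_involute_mul_of_basis {I : Type*} (b : Module.Basis I R M) {w : CliffordAlgebra Q}
    (hw : ∀ i, w * ι Q (b i) = -(ι Q (b i) * w)) (x : CliffordAlgebra Q) :
    w * x = involute x * w := by
  have hι (m : M) : w * ι Q m = -(ι Q m * w) := by
    have h : LinearMap.mulLeft R w ∘ₗ ι Q = -(LinearMap.mulRight R w ∘ₗ ι Q) := b.ext hw
    exact DFunLike.congr_fun h m
  induction x using CliffordAlgebra.left_induction with
  | algebraMap r => rw [AlgHom.commutes, Algebra.commutes]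
  | add x y hx hy => rw [mul_add, map_add, add_mul, hx, hy]
  | ι_mul x m hx => rw [← mul_assoc, hι, map_mul, involute_ι, neg_mul, mul_assoc, hx]; noncomm_ring

variable [Invertible (2 : R)] {I : Type*} [Finite I]

theorem mem_range_algebraMap_of_contractLeft_coord_eq_zero (b : Module.Basis I R M)
    {x : CliffordAlgebra Q} (hx : ∀ i, contractLeft (b.coord i) x = 0) :
    x ∈ Set.range (algebraMap R (CliffordAlgebra Q)) := by
  obtain ⟨r, hr⟩ := exteriorAlgebra_mem_range_algebraMap_of_contractLeft_coord_eq_zero b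
    (x := changeForm changeForm.associated_neg_proof x) fun i => by
      rw [← changeForm_contractLeft, hx, map_zero]
  refine ⟨r, (equivExterior Q).injective ?_⟩
  exact (changeForm_algebraMap changeForm.associated_neg_proof r).trans hr

end Contraction

section Field

variable {K V : Type*} [Field K] [Invertible (2 : K)] [AddCommGroup V] [Module K V]
  [FiniteDimensional K V] {Q : QuadraticForm K V}

instance finiteDimensional_cliffordAlgebra : FiniteDimensional K (CliffordAlgebra Q) :=
  have := Module.Finite.of_basis (Module.finBasis K V).ExteriorAlgebra
  Module.Finite.equiv (equivExterior Q).symm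

theorem one_mem_of_contractLeft_mem {N : Submodule K (CliffordAlgebra Q)} (hN : N ≠ ⊥)
    (hd : ∀ d, ∀ x ∈ N, contractLeft d x ∈ N) : 1 ∈ N := by
  classical
  let b := Module.finBasis K V
  have hkill (s : Finset (Fin (Module.finrank K V))) :
      ∃ y ∈ N, y ≠ 0 ∧ ∀ i ∈ s, contractLeft (b.coord i) y = 0 := by
    induction s using Finset.induction_on with
    | empty => simpa using N.ne_bot_iff.1 hN
    | insert i s _ ih =>
      obtain ⟨y, hyN, hy0, hy⟩ := ih
      by_cases hiy : contractLeft (b.coord i) y = 0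
      · exact ⟨y, hyN, hy0, (Finset.forall_mem_insert _ _ _).2 ⟨hiy, hy⟩⟩
      · refine ⟨_, hd (b.coord i) y hyN, hiy, (Finset.forall_mem_insert _ _ _).2
          ⟨contractLeft_contractLeft _ y, fun j hj => ?_⟩⟩
        rw [contractLeft_comm, hy j hj, map_zero, neg_zero]
  obtain ⟨y, hyN, hy0, hy⟩ := hkill Finset.univ
  obtain ⟨r, rfl⟩ := mem_range_algebraMap_of_contractLeft_coord_eq_zero b
    fun i => hy i (Finset.mem_univ i)
  have hr : r ≠ 0 := by rintro rfl; exact hy0 (map_zero _)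
  rwa [Algebra.algebraMap_eq_smul_one, N.smul_mem_iff hr] at hyN

theorem mem_range_algebraMap_of_commute_ι (hQ : Q.polarBilin.Nondegenerate)
    {x : CliffordAlgebra Q} (hα : involute x = x) (hx : ∀ v, Commute (ι Q v) x) :
    x ∈ Set.range (algebraMap K (CliffordAlgebra Q)) := by
  refine mem_range_algebraMap_of_contractLeft_coord_eq_zero (Module.finBasis K V) fun i => ?_
  obtain ⟨v, hv⟩ := (LinearMap.BilinForm.toDual Q.polarBilin hQ).surjective
    ((Module.finBasis K V).coord i)
  change Q.polarBilin v = _ at hv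
  rw [← hv, ← ι_mul_sub_involute_mul_ι, hα, (hx v).eq, sub_self]

theorem injective_of_map_involute_eq_zero (hQ : Q.polarBilin.Nondegenerate)
    {A : Type*} [Ring A] [Algebra K A] [Nontrivial A] (φ : CliffordAlgebra Q →ₐ[K] A)
    (hφ : ∀ x, φ x = 0 → φ (involute x) = 0) : Function.Injective φ := by
  suffices LinearMap.ker φ.toLinearMap = ⊥ from LinearMap.ker_eq_bot.1 this
  by_contra hker
  refine one_ne_zero (α := A) ((map_one φ).symm.trans ?_)
  refine one_mem_of_contractLeft_mem hker fun d x (hx : φ x = 0) => ?_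
  obtain ⟨v, rfl⟩ := (LinearMap.BilinForm.toDual Q.polarBilin hQ).surjective d
  change φ (contractLeft (Q.polarBilin v) x) = 0
  rw [← ι_mul_sub_involute_mul_ι, map_sub, map_mul, map_mul, hx, hφ x hx, mul_zero, zero_mul,
    sub_zero]

theorem mul_mem_range_algebraMap_of_mul_eq_involute_mul (hQ : Q.polarBilin.Nondegenerate)
    {w z : CliffordAlgebra Q} (hwα : involute w = w) (hzα : involute z = z)
    (hw : ∀ x, w * x = involute x * w) (hz : ∀ x, z * x = involute x * z) :
    w * z ∈ Set.range (algebraMap K (CliffordAlgebra Q)) := by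
  refine mem_range_algebraMap_of_commute_ι hQ (by rw [map_mul, hwα, hzα]) fun v => Eq.symm ?_
  rw [mul_assoc, hz, ← mul_assoc, hw, involute_involute, mul_assoc]

theorem eq_or_eq_neg_of_mul_eq_involute_mul (hQ : Q.polarBilin.Nondegenerate)
    {w z : CliffordAlgebra Q} (hunit : IsUnit w) (hwα : involute w = w) (hzα : involute z = z)
    (hw : ∀ x, w * x = involute x * w) (hz : ∀ x, z * x = involute x * z)
    (hsq : z * z = w * w) : z = w ∨ z = -w := by
  obtain ⟨r, hr⟩ := mul_mem_range_algebraMap_of_mul_eq_involute_mul hQ hwα hzα hw hz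
  obtain ⟨s, hs⟩ := mul_mem_range_algebraMap_of_mul_eq_involute_mul hQ hwα hwα hw hw
  have hcomm : Commute w z := by rw [commute_iff_eq, hw, hzα]
  have hrs : r ^ 2 = s ^ 2 := (algebraMap K (CliffordAlgebra Q)).injective <| by
    rw [map_pow, map_pow, hr, hs, hcomm.mul_pow, sq z, hsq, ← sq, ← sq, sq (w ^ 2)]
  refine (sq_eq_sq_iff_eq_or_eq_neg.1 hrs).imp (fun h => ?_) fun h => ?_
  · exact hunit.mul_left_cancel (by rw [← hr, h, hs])
  · exact hunit.mul_left_cancel (by rw [← hr, h, map_neg, hs, mul_neg])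

end Field

section Volume

theorem mul_prod_map_of_pairwise_anticommute {A I : Type*} [Ring A] [DecidableEq I] {e : I → A}
    (he : Pairwise fun i j => e i * e j = -(e j * e i)) (i : I) (l : List I) :
    e i * (l.map e).prod = (-1) ^ (l.length + l.count i) * ((l.map e).prod * e i) := by
  induction l with
  | nil => simp
  | cons j l ih =>
    rw [List.map_cons, List.prod_cons, List.length_cons]
    by_cases hij : j = i
    · subst hij
      rw [List.count_cons_self, mul_assoc, ih, add_add_add_comm, pow_add _ _ (1 + 1),
        ((Commute.neg_one_left (e j)).pow_left _).symm.left_comm]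
      noncomm_ring
    · rw [List.count_cons_of_ne hij, ← mul_assoc, he (Ne.symm hij), neg_mul, mul_assoc, ih,
        ((Commute.neg_one_left (e j)).pow_left _).symm.left_comm, add_right_comm, pow_succ]
      noncomm_ring

/-- The volume element `e₁e₂⋯eₙ` of a Clifford algebra with respect to an ordered basis. -/
noncomputable def volumeElement {R M : Type*} [CommRing R] [AddCommGroup M] [Module R M]
    (Q : QuadraticForm R M) {n : ℕ} (b : Module.Basis (Fin n) R M) : CliffordAlgebra Q :=
  ((List.finRange n).map fun i => ι Q (b i)).prod

variable {R M : Type*} [CommRing R] [AddCommGroup M] [Module R M] {Q : QuadraticForm R M} {n : ℕ}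
  {b : Module.Basis (Fin n) R M}

theorem volumeElement_mul (hn : Even n) (hb : Q.polarBilin.IsOrthoᵢ b) (x : CliffordAlgebra Q) :
    volumeElement Q b * x = involute x * volumeElement Q b := by
  refine mul_eq_involute_mul_of_basis b (fun i => ?_) x
  have hanti : Pairwise fun i j => ι Q (b i) * ι Q (b j) = -(ι Q (b j) * ι Q (b i)) :=
    fun i j hij => by
      have hpolar : QuadraticMap.polar Q (b i) (b j) = 0 := hb hij
      exact eq_neg_of_add_eq_zero_left (by rw [ι_mul_ι_add_swap, hpolar, map_zero])
  have hcount : (List.finRange n).count i = 1 :=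
    List.count_eq_one_of_mem (List.nodup_finRange n) (List.mem_finRange i)
  have hswap := mul_prod_map_of_pairwise_anticommute hanti i (List.finRange n)
  rw [hcount, List.length_finRange, hn.add_one.neg_one_pow, neg_one_mul] at hswap
  exact (neg_eq_iff_eq_neg.2 hswap).symm

theorem involute_volumeElement (hn : Even n) :
    involute (volumeElement Q b) = volumeElement Q b := by
  have h := involute_prod_map_ι (Q := Q) ((List.finRange n).map b)
  rwa [List.map_map, List.length_map, List.length_finRange, hn.neg_one_pow, one_smul] at h

theorem isUnit_volumeElement (hb : ∀ i, IsUnit (Q (b i))) : IsUnit (volumeElement Q b) := by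
  refine List.prod_isUnit fun x hx => ?_
  obtain ⟨i, -, rfl⟩ := List.mem_map.1 hx
  exact isUnit_ι_of_isUnit Q (hb i)

theorem map_volumeElement {A : Type*} [Ring A] [Algebra R A] (φ : CliffordAlgebra Q →ₐ[R] A) :
    φ (volumeElement Q b) = ((List.finRange n).map fun i => φ (ι Q (b i))).prod := by
  rw [volumeElement, map_list_prod, List.map_map]
  rfl

theorem exists_algHom_of_basis {I A : Type*} [Ring A] [Algebra R A] (h2 : IsUnit (2 : A))
    (b : Module.Basis I R M) {γ : I → A}
    (hγ : ∀ i j, γ i * γ j + γ j * γ i = algebraMap R A (QuadraticMap.polar Q (b i) (b j))) :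
    ∃ φ : CliffordAlgebra Q →ₐ[R] A, ∀ i, φ (ι Q (b i)) = γ i := by
  have hf : ∀ v, b.constr R γ v * b.constr R γ v = algebraMap R A (Q v) := by
    refine (forall_mul_self_eq_iff h2 _).2 (b.ext fun i => b.ext fun j => ?_)
    simpa [b.constr_basis] using hγ i j
  exact ⟨lift Q ⟨b.constr R γ, hf⟩, fun i => by rw [lift_ι_apply, b.constr_basis]⟩

theorem involute_comp_of_basis {I : Type*} (b : Module.Basis I R M)
    {φ : CliffordAlgebra Q →ₐ[R] CliffordAlgebra Q} (hφ : ∀ i, φ (ι Q (b i)) ∈ evenOdd Q 1) :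
    φ.comp involute = involute.comp φ := by
  refine CliffordAlgebra.hom_ext (b.ext fun i => ?_)
  change φ (involute (ι Q (b i))) = involute (φ (ι Q (b i)))
  rw [involute_ι, map_neg, involute_eq_of_mem_odd (hφ i)]

end Volume

theorem map_volumeElement_eq_or_eq_neg {K V : Type*} [Field K] [Invertible (2 : K)]
    [AddCommGroup V] [Module K V] {Q : QuadraticForm K V} {n : ℕ} (hn : Even n)
    {b : Module.Basis (Fin n) K V} (hb : Q.polarBilin.IsOrthoᵢ b)
    (hQ : Q.polarBilin.Nondegenerate) {φ : CliffordAlgebra Q →ₐ[K] CliffordAlgebra Q}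
    (hφ : φ.comp involute = involute.comp φ) :
    φ (volumeElement Q b) = volumeElement Q b ∨ φ (volumeElement Q b) = -volumeElement Q b := by
  have := Module.Finite.of_basis b
  have hφα (x) : φ (involute x) = involute (φ x) := DFunLike.congr_fun hφ x
  have hinj : Function.Injective φ :=
    injective_of_map_involute_eq_zero hQ φ fun x hx => by rw [hφα, hx, map_zero]
  have hsurj : Function.Surjective φ :=
    LinearMap.injective_iff_surjective (f := φ.toLinearMap).1 hinj
  have hunit : IsUnit (volumeElement Q b) := isUnit_volumeElement fun i => by
    have := hb.not_isOrtho_basis_self_of_separatingLeft hQ.1 i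
    rw [QuadraticMap.polarBilin_apply_apply, QuadraticMap.polar_self] at this
    exact (right_ne_zero_of_smul this).isUnit
  have hα : involute (volumeElement Q b) = volumeElement Q b := involute_volumeElement hn
  refine eq_or_eq_neg_of_mul_eq_involute_mul hQ hunit hα (by rw [← hφα, hα])
    (volumeElement_mul hn hb) (hsurj.forall.2 fun x => ?_) ?_
  · rw [← map_mul, volumeElement_mul hn hb, map_mul, hφα]
  · obtain ⟨s, hs⟩ := mul_mem_range_algebraMap_of_mul_eq_involute_mul hQ hα hα
      (volumeElement_mul hn hb) (volumeElement_mul hn hb)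
    rw [← map_mul, ← hs, AlgHom.commutes]

theorem stmt_10_general {K V : Type*} [Field K] [Invertible (2 : K)] [AddCommGroup V] [Module K V]
    {Q : QuadraticForm K V} {n : ℕ} (hn : Even n) (b : Module.Basis (Fin n) K V)
    (hb : Q.polarBilin.IsOrthoᵢ b) (hQ : Q.polarBilin.Nondegenerate)
    (γ : Fin n → CliffordAlgebra Q) (hodd : ∀ i, γ i ∈ evenOdd Q 1)
    (hγ : ∀ i j, γ i * γ j + γ j * γ i =
      algebraMap K (CliffordAlgebra Q) (QuadraticMap.polar Q (b i) (b j))) :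
    ((List.finRange n).map γ).prod = volumeElement Q b ∨
      ((List.finRange n).map γ).prod = -volumeElement Q b := by
  have h2 : IsUnit (2 : CliffordAlgebra Q) := by
    simpa only [map_ofNat] using
      (isUnit_of_invertible (2 : K)).map (algebraMap K (CliffordAlgebra Q))
  obtain ⟨φ, hφ⟩ := exists_algHom_of_basis h2 b hγ
  have hprod : φ (volumeElement Q b) = ((List.finRange n).map γ).prod := by
    simp only [map_volumeElement, hφ]
  rw [← hprod]
  exact map_volumeElement_eq_or_eq_neg hn hb hQ
    (involute_comp_of_basis b fun i => (hφ i).symm ▸ hodd i)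

theorem polar_weightedSumSquares {R I : Type*} [CommRing R] [Fintype I] (w x y : I → R) :
    QuadraticMap.polar (QuadraticMap.weightedSumSquares R w) x y =
      2 * ∑ i, w i * (x i * y i) := by
  simp only [QuadraticMap.polar, QuadraticMap.weightedSumSquares_apply, Pi.add_apply, smul_eq_mul,
    ← Finset.sum_sub_distrib, Finset.mul_sum]
  exact Finset.sum_congr rfl fun i _ => by ring

theorem polar_Qpq_basisFun (p q : ℕ) (a b : Fin (p + q)) :
    QuadraticMap.polar (Qpq p q) (Pi.basisFun ℝ _ a) (Pi.basisFun ℝ _ b) = 2 * eta p q a b := by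
  rw [Qpq, polar_weightedSumSquares, Finset.sum_eq_single a]
  · simp [eta, Pi.single_apply]
  · intro c _ hca
    simp [hca]
  · simp

theorem isOrtho_polarBilin_Qpq_basisFun (p q : ℕ) :
    (Qpq p q).polarBilin.IsOrthoᵢ (Pi.basisFun ℝ (Fin (p + q))) := fun a b hab =>
  (polar_Qpq_basisFun p q a b).trans (by rw [eta, if_neg hab, mul_zero])

theorem nondegenerate_polarBilin_Qpq (p q : ℕ) : (Qpq p q).polarBilin.Nondegenerate := by
  refine (isOrtho_polarBilin_Qpq_basisFun p q).nondegenerate_of_not_isOrtho_basis_self _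
    fun a => ?_
  rw [QuadraticMap.polarBilin_apply_apply, polar_Qpq_basisFun, eta, if_pos rfl]
  split_ifs <;> norm_num

theorem volumeElement_Qpq_basisFun (p q : ℕ) :
    volumeElement (Qpq p q) (Pi.basisFun ℝ (Fin (p + q))) = vol p q :=
  congrArg List.prod <| List.map_congr_left fun a _ => by rw [Pi.basisFun_apply, gen]

/-- Odd generators satisfying the Clifford relations in even dimension have
ordered product equal to ± the volume element. -/
theorem stmt_10 (p q : ℕ) (hn : Even (p + q))
    (γ : Fin (p + q) → CliffordAlgebra (Qpq p q))
    (hodd : ∀ a, γ a ∈ evenOdd (Qpq p q) 1)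
    (hγ : ∀ a b, γ a * γ b + γ b * γ a =
      algebraMap ℝ (CliffordAlgebra (Qpq p q)) (2 * eta p q a b)) :
    ((List.finRange (p + q)).map γ).prod = vol p q ∨
      ((List.finRange (p + q)).map γ).prod = -vol p q := by
  rw [← volumeElement_Qpq_basisFun]
  exact stmt_10_general hn _ (isOrtho_polarBilin_Qpq_basisFun p q)
    (nondegenerate_polarBilin_Qpq p q) γ hodd fun a b => by rw [hγ, polar_Qpq_basisFun]
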